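/- arXiv:1504.06657 — 6 statements merged into one kernel-verified Lean document; each statement's English description precedes it below -/
import Mathlib

section
/- Let k and m be positive integers with m ≥ k+1. If F is an intersecting family of k-multisets of [m], then |F| ≤ C(m+k-2, k-1). Moreover, if m > k+1, equality holds if and only if F consists of all k-multisets of [m] that contain a fixed element of [m]. -/
/-!
Two multisets intersect exactly when their supports do, so everything is governed by the
intersecting family `G` of supports, viewed as subsets of `Fin m`. A set of size `s ≥ 1` is the
support of `C(k-1, s-1)` multisets of cardinality `k` (`card_support_fiber_le`), hence
`|F| ≤ ∑ g_s * C(k-1, s-1)` where `g_s` counts the members of `G` of size `s`.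

The levels `s` and `m - s` are bounded jointly. If `s ≤ m - s`, then `g_s ≤ C(m-1, s-1)` by the
Erdős–Ko–Rado theorem for sets, `g_s + g_{m-s} ≤ C(m, s)` because `G` contains no two complementary
sets, and, as `m ≥ k + 1`, the weight `C(k-1, s-1)` is at least `C(k-1, m-s-1)`. So the two levels
together weigh at most what they do in a star (`pair_level_le`), and Vandermonde's identity sums
the weights of a star to `C(m+k-2, k-1)` (`weighted_sum_le`).

For `m > k + 1` the level `m - 1` has weight `0` and the level `1` has weight `1`, so equality forces
`G` to contain a singleton (`weighted_sum_lt`). All members of `F` then contain its element, i.e.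
`F` lies in a star, whose size `C(m+k-2, k-1)` is that of `F` (`star_ncard`).
-/

/-- A `k`-multiset of `[m]`: a multiset of cardinality `k` whose elements lie in `{1,…,m}`. -/
def IsKMultisetOf (m k : ℕ) (A : Multiset ℕ) : Prop :=
  Multiset.card A = k ∧ ∀ x ∈ A, x ∈ Finset.Icc 1 m

namespace MultisetEKR

open Finset

/-! ### Monotonicity of binomial coefficients -/

lemma choose_le_choose_half {n a b : ℕ} (hab : a ≤ b) (hb : b ≤ n / 2) :
    n.choose a ≤ n.choose b := by
  induction b, hab using Nat.le_induction with
  | base => exact le_rfl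
  | succ b _ ih =>
    exact (ih (by omega)).trans (Nat.choose_le_succ_of_lt_half_left (by omega))

/-- Unimodality of binomial coefficients: `b` is at least as far from `n / 2` as `a` is. -/
lemma choose_anti {n a b : ℕ} (hab : a ≤ b) (h : n ≤ a + b) : n.choose b ≤ n.choose a := by
  rcases lt_or_ge n b with hb | hb
  · simp [Nat.choose_eq_zero_of_lt hb]
  · rw [← Nat.choose_symm hb]
    rcases le_or_gt a (n / 2) with ha | ha
    · exact choose_le_choose_half (by omega) ha
    · rw [← Nat.choose_symm (hab.trans hb)]
      exact choose_le_choose_half (by omega) (by omega)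

/-! ### Levels of an intersecting family of sets -/

/-- The number of members of `G` of size `s`. -/
def level {m : ℕ} (G : Finset (Finset (Fin m))) (s : ℕ) : ℕ := #{S ∈ G | #S = s}

section Levels

variable {m : ℕ} {G : Finset (Finset (Fin m))}
  (hG : (G : Set (Finset (Fin m))).Intersecting)
include hG

lemma level_le {s : ℕ} (hs : s ≤ m / 2) : level G s ≤ (m - 1).choose (s - 1) := by
  refine erdos_ko_rado (hG.mono ?_) ?_ hs
  · intro S hS
    simp only [coe_filter, Set.mem_ofPred_eq] at hS
    exact hS.1
  · intro S hS
    simp only [coe_filter, Set.mem_ofPred_eq] at hS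
    exact hS.2

/-- The members of size `s` and the complements of the members of size `t = m - s` are distinct
sets of size `s`. -/
lemma level_add_le {s t : ℕ} (hst : s + t = m) : level G s + level G t ≤ m.choose s := by
  classical
  have hcard : #(({S ∈ G | #S = t}).image compl) = level G t :=
    card_image_of_injective _ compl_injective
  have hdisj : Disjoint ({S ∈ G | #S = s}) (({S ∈ G | #S = t}).image compl) := by
    rw [Finset.disjoint_left]
    intro S hS hS'
    simp only [mem_image, mem_filter] at hS hS'
    obtain ⟨T, ⟨hT, -⟩, rfl⟩ := hS'
    exact hG hS.1 hT disjoint_compl_left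
  rw [← hcard, level, ← card_union_of_disjoint hdisj]
  calc _ ≤ #(powersetCard s (univ : Finset (Fin m))) := by
        refine card_le_card fun S hS => ?_
        simp only [mem_union, mem_image, mem_filter] at hS
        rw [mem_powersetCard_univ]
        rcases hS with hS | ⟨T, ⟨-, hT⟩, rfl⟩
        · exact hS.2
        · rw [card_compl, Fintype.card_fin]; omega
    _ = _ := by simp

/-- The levels `i + 1` and `j + 1` are complementary. Together they weigh at most as much as
the corresponding levels of a star. -/
lemma pair_level_le_of_le {k i j : ℕ} (hm : k + 1 ≤ m) (hij : i + j + 2 = m) (h : i ≤ j) :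
    level G (i + 1) * (k - 1).choose i + level G (j + 1) * (k - 1).choose j ≤
      (m - 1).choose i * (k - 1).choose i + (m - 1).choose j * (k - 1).choose j := by
  have h1 : level G (i + 1) ≤ (m - 1).choose i := level_le hG (by omega)
  have h2 := level_add_le hG (s := i + 1) (t := j + 1) (by omega)
  have h3 : (k - 1).choose j ≤ (k - 1).choose i := choose_anti h (by omega)
  have h4 : m.choose (i + 1) = (m - 1).choose i + (m - 1).choose j := by
    obtain ⟨n, rfl⟩ : ∃ n, m = n + 1 := ⟨m - 1, by omega⟩
    rw [Nat.choose_succ_succ, Nat.add_sub_cancel]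
    congr 1
    exact Nat.choose_symm_of_eq_add (by omega)
  rw [h4] at h2
  obtain ⟨d, hd⟩ := Nat.exists_eq_add_of_le h3
  rw [hd]
  nlinarith [Nat.mul_le_mul_right d h1, Nat.mul_le_mul_right ((k - 1).choose j) h2]

lemma pair_level_le {k i j : ℕ} (hm : k + 1 ≤ m) (hij : i + j + 2 = m) :
    level G (i + 1) * (k - 1).choose i + level G (j + 1) * (k - 1).choose j ≤
      (m - 1).choose i * (k - 1).choose i + (m - 1).choose j * (k - 1).choose j := by
  rcases le_total i j with h | h
  · exact pair_level_le_of_le hG hm hij h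
  · have := pair_level_le_of_le hG hm (by omega) h
    omega

end Levels

/-- Symmetrising `∑ f i` under `i ↦ m - 2 - i`. -/
lemma two_mul_sum (m : ℕ) (f : ℕ → ℕ) :
    2 * ∑ i ∈ range (m - 1), f i = ∑ i ∈ range (m - 1), (f i + f (m - 1 - 1 - i)) := by
  rw [sum_add_distrib, sum_range_reflect, two_mul]

/-- Vandermonde's identity, with the sum running up to `m - 2 ≥ k - 1`. -/
lemma star_weight {k m : ℕ} (hk : 0 < k) (hm : k + 1 ≤ m) :
    ∑ i ∈ range (m - 1), (m - 1).choose i * (k - 1).choose i = (m + k - 2).choose (k - 1) := by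
  have h : m + k - 2 = (m - 1) + (k - 1) := by omega
  rw [h, Nat.add_choose_eq, Finset.Nat.sum_antidiagonal_eq_sum_range_succ_mk]
  symm
  calc _ = ∑ i ∈ range (k - 1).succ, (m - 1).choose i * (k - 1).choose i := by
        refine sum_congr rfl fun i hi => ?_
        have hi := mem_range.1 hi
        simp only
        rw [Nat.choose_symm (by omega)]
    _ = _ := by
        refine sum_subset (range_subset_range.2 (by omega)) fun i _ hi => ?_
        rw [mem_range] at hi
        rw [Nat.choose_eq_zero_of_lt (n := k - 1) (by omega), mul_zero]

lemma weighted_sum_le {k m : ℕ} {G : Finset (Finset (Fin m))}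
    (hG : (G : Set (Finset (Fin m))).Intersecting) (hk : 0 < k) (hm : k + 1 ≤ m) :
    ∑ i ∈ range (m - 1), level G (i + 1) * (k - 1).choose i ≤ (m + k - 2).choose (k - 1) := by
  rw [← star_weight hk hm]
  refine Nat.le_of_mul_le_mul_left ?_ two_pos
  rw [two_mul_sum, two_mul_sum]
  refine sum_le_sum fun i hi => ?_
  rw [mem_range] at hi
  exact pair_level_le hG hm (by omega)

/-- Without singletons, the levels `1` and `m - 1` contribute nothing, whereas in a star the
level `1` contributes `1`. -/
lemma weighted_sum_lt {k m : ℕ} {G : Finset (Finset (Fin m))}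
    (hG : (G : Set (Finset (Fin m))).Intersecting) (hk : 0 < k) (hm : k + 1 < m)
    (h1 : level G 1 = 0) :
    ∑ i ∈ range (m - 1), level G (i + 1) * (k - 1).choose i < (m + k - 2).choose (k - 1) := by
  rw [← star_weight hk hm.le]
  refine Nat.lt_of_mul_lt_mul_left (a := 2) ?_
  rw [two_mul_sum, two_mul_sum]
  refine sum_lt_sum (fun i hi => ?_) ⟨0, mem_range.2 (by omega), ?_⟩
  · rw [mem_range] at hi
    exact pair_level_le hG hm.le (by omega)
  · have h0 : (k - 1).choose (m - 1 - 1 - 0) = 0 := Nat.choose_eq_zero_of_lt (by omega)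
    simp only [h0, zero_add, h1]
    simp

/-! ### Supports of multisets -/

/-- A multiset with support `S` is `S` plus an arbitrary multiset of size `k - |S|` on `S`. -/
lemma card_support_fiber_le {k : ℕ} (F : Finset (Multiset ℕ))
    (hF : ∀ A ∈ F, Multiset.card A = k) (S : Finset ℕ) (hS : S.Nonempty) :
    #{A ∈ F | A.toFinset = S} ≤ (k - 1).choose (#S - 1) := by
  classical
  have hpos := hS.card_pos
  rcases lt_or_ge k #S with hlt | hle
  · have : ({A ∈ F | A.toFinset = S}) = ∅ := by
      refine filter_eq_empty_iff.2 fun A hA hAS => ?_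
      have := Multiset.toFinset_card_le A
      rw [hAS, hF A hA] at this
      omega
    simp [this]
  · let f : Sym S (k - #S) → Multiset ℕ := fun s => S.val + (s : Multiset S).map (↑)
    have hsub : ({A ∈ F | A.toFinset = S}) ⊆ univ.image f := by
      intro A hA
      obtain ⟨hAF, hAS⟩ := mem_filter.1 hA
      have hSA : S.val ≤ A := by
        rw [← hAS]
        exact Multiset.dedup_le A
      obtain ⟨B, hB⟩ := Multiset.le_iff_exists_add.1 hSA
      have hBS : ∀ x ∈ B, x ∈ S := by
        intro x hx
        rw [← hAS, Multiset.mem_toFinset, hB]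
        exact Multiset.mem_add.2 (Or.inr hx)
      have hcard := hF A hAF
      lift B to Multiset S using hBS
      rw [hB, Multiset.card_add, Multiset.card_map, card_val] at hcard
      exact mem_image.2 ⟨⟨B, by omega⟩, mem_univ _, hB.symm⟩
    calc _ ≤ #(univ.image f) := card_le_card hsub
      _ ≤ Fintype.card (Sym S (k - #S)) := card_image_le
      _ = (k - 1).choose (k - #S) := by
        rw [Sym.card_sym_eq_choose, Fintype.card_coe]
        congr 1
        omega
      _ = _ := Nat.choose_symm_of_eq_add (by omega)

/-- The support of `A`, with the element `i + 1` of `{1,…,m}` encoded as `i : Fin m`. -/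
def supp (m : ℕ) (A : Multiset ℕ) : Finset (Fin m) := {i | (i : ℕ) + 1 ∈ A}

lemma mem_supp {m : ℕ} {A : Multiset ℕ} {i : Fin m} : i ∈ supp m A ↔ (i : ℕ) + 1 ∈ A := by
  simp [supp]

/-- The inclusion `i ↦ i + 1` of `Fin m` into `ℕ`, with range `{1,…,m}`. -/
def shift (m : ℕ) : Fin m ↪ ℕ := ⟨fun i => (i : ℕ) + 1, fun i j h => Fin.ext (by simpa using h)⟩

lemma exists_shift {m x : ℕ} (hx : x ∈ Icc 1 m) : ∃ i : Fin m, (i : ℕ) + 1 = x := by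
  rw [mem_Icc] at hx
  exact ⟨⟨x - 1, by omega⟩, by simp only; omega⟩

lemma toFinset_eq_map_supp {m k : ℕ} {A : Multiset ℕ} (hA : IsKMultisetOf m k A) :
    A.toFinset = (supp m A).map (shift m) := by
  ext x
  simp only [Multiset.mem_toFinset, mem_map, mem_supp, shift]
  constructor
  · intro hx
    obtain ⟨i, rfl⟩ := exists_shift (hA.2 x hx)
    exact ⟨i, hx, rfl⟩
  · rintro ⟨i, hi, rfl⟩
    exact hi

lemma inter_ne_zero_iff {A B : Multiset ℕ} : A ∩ B ≠ 0 ↔ ∃ x, x ∈ A ∧ x ∈ B := by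
  constructor
  · intro h
    obtain ⟨x, hx⟩ := Multiset.exists_mem_of_ne_zero h
    exact ⟨x, Multiset.mem_inter.1 hx⟩
  · rintro ⟨x, hx⟩ h
    have := Multiset.mem_inter.2 hx
    rw [h] at this
    exact Multiset.notMem_zero x this

lemma supp_intersecting {m k : ℕ} (F : Finset (Multiset ℕ))
    (hF : ∀ A ∈ F, IsKMultisetOf m k A) (hint : ∀ A ∈ F, ∀ B ∈ F, A ∩ B ≠ 0) :
    ((F.image (supp m) : Finset _) : Set (Finset (Fin m))).Intersecting := by
  intro S hS T hT hdisj
  obtain ⟨A, hA, rfl⟩ := mem_image.1 (mem_coe.1 hS)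
  obtain ⟨B, hB, rfl⟩ := mem_image.1 (mem_coe.1 hT)
  obtain ⟨x, hxA, hxB⟩ := inter_ne_zero_iff.1 (hint A hA B hB)
  obtain ⟨i, rfl⟩ := exists_shift ((hF A hA).2 x hxA)
  exact Finset.disjoint_left.1 hdisj (mem_supp.2 hxA) (mem_supp.2 hxB)

/-- Supports of size `m` do not occur in the sum since `k < m`. -/
lemma card_le_weighted_sum {m k : ℕ} (hm : k + 1 ≤ m) (F : Finset (Multiset ℕ))
    (hF : ∀ A ∈ F, IsKMultisetOf m k A) (hint : ∀ A ∈ F, ∀ B ∈ F, A ∩ B ≠ 0) :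
    #F ≤ ∑ i ∈ range (m - 1), level (F.image (supp m)) (i + 1) * (k - 1).choose i := by
  set G := F.image (supp m) with hGdef
  have hG : (G : Set (Finset (Fin m))).Intersecting := supp_intersecting F hF hint
  have hsize : ∀ S ∈ G, 1 ≤ #S ∧ #S ≤ k := by
    intro S hS
    refine ⟨card_pos.2 (nonempty_iff_ne_empty.2 (hG.ne_bot (mem_coe.2 hS))), ?_⟩
    obtain ⟨A, hA, rfl⟩ := mem_image.1 hS
    rw [← card_map (shift m), ← toFinset_eq_map_supp (hF A hA), ← (hF A hA).1]
    exact Multiset.toFinset_card_le A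
  calc #F = ∑ S ∈ G, #{A ∈ F | supp m A = S} :=
        card_eq_sum_card_fiberwise fun A hA => mem_image_of_mem _ hA
    _ ≤ ∑ S ∈ G, (k - 1).choose (#S - 1) := by
        refine sum_le_sum fun S hS => ?_
        have h := card_support_fiber_le F (fun A hA => (hF A hA).1) (S.map (shift m))
          ((card_pos.1 (hsize S hS).1).map)
        rw [card_map] at h
        refine le_trans (card_le_card fun A hA => ?_) h
        obtain ⟨hAF, rfl⟩ := mem_filter.1 hA
        exact mem_filter.2 ⟨hAF, toFinset_eq_map_supp (hF A hAF)⟩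
    _ = ∑ i ∈ range (m - 1), ∑ S ∈ G with #S - 1 = i, (k - 1).choose (#S - 1) := by
        refine (sum_fiberwise_of_maps_to (fun S hS => mem_range.2 ?_) _).symm
        have := hsize S hS
        omega
    _ = _ := by
        refine sum_congr rfl fun i _ => ?_
        rw [sum_congr rfl (g := fun _ => (k - 1).choose i)
          (fun S hS => by rw [(mem_filter.1 hS).2]), sum_const, smul_eq_mul, level]
        congr 2
        refine filter_congr fun S hS => ?_
        have := hsize S hS
        omega

/-! ### Stars -/

/-- The star at `x` consists of the multisets `x ::ₘ B` with `B` of size `k - 1`. -/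
lemma star_ncard {m k x : ℕ} (hk : 0 < k) (hx : x ∈ Icc 1 m) :
    {A | IsKMultisetOf m k A ∧ x ∈ A}.ncard = (m + k - 2).choose (k - 1) := by
  let f : Sym (Fin m) (k - 1) → Multiset ℕ := fun s => x ::ₘ (s : Multiset (Fin m)).map (shift m)
  have hf : Function.Injective f := by
    intro s t h
    exact Sym.coe_injective
      (Multiset.map_injective (shift m).injective (Multiset.cons_inj_right x |>.1 h))
  have himg : {A | IsKMultisetOf m k A ∧ x ∈ A} = f '' Set.univ := by
    ext A
    simp only [Set.mem_ofPred_eq, Set.image_univ, Set.mem_range]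
    constructor
    · rintro ⟨⟨hcard, hmem⟩, hxA⟩
      obtain ⟨B, rfl⟩ := Multiset.exists_cons_of_mem hxA
      have hB : ∀ y ∈ B, ∃ i : Fin m, shift m i = y := fun y hy =>
        exists_shift (hmem y (Multiset.mem_cons_of_mem hy))
      obtain ⟨C, rfl⟩ : ∃ C : Multiset (Fin m), C.map (shift m) = B := by
        have : CanLift ℕ (Fin m) (shift m) (fun y => ∃ i : Fin m, shift m i = y) :=
          ⟨fun _ h => h⟩
        lift B to Multiset (Fin m) using hB
        exact ⟨B, rfl⟩
      rw [Multiset.card_cons, Multiset.card_map] at hcard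
      exact ⟨⟨C, by omega⟩, rfl⟩
    · rintro ⟨s, rfl⟩
      refine ⟨⟨?_, ?_⟩, Multiset.mem_cons_self x _⟩
      · simp only [f, Multiset.card_cons, Multiset.card_map, Sym.card_coe]
        omega
      · intro y hy
        rcases Multiset.mem_cons.1 hy with rfl | hy
        · exact hx
        · obtain ⟨i, -, rfl⟩ := Multiset.mem_map.1 hy
          have := i.isLt
          change (i : ℕ) + 1 ∈ Icc 1 m
          rw [mem_Icc]
          omega
  rw [himg, Set.ncard_image_of_injective _ hf, Set.ncard_univ, Nat.card_eq_fintype_card,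
    Sym.card_sym_eq_choose, Fintype.card_fin]
  congr 1
  omega

lemma finite_kMultisets (m k : ℕ) : {A | IsKMultisetOf m k A}.Finite := by
  refine (Set.finite_Iic (k • (Icc 1 m).val)).subset fun A hA => ?_
  rw [Set.mem_Iic, Multiset.le_iff_count]
  intro x
  by_cases hx : x ∈ A
  · rw [Multiset.count_nsmul, Multiset.count_eq_one_of_mem (Icc 1 m).nodup (hA.2 x hx), mul_one,
      ← hA.1]
    exact Multiset.count_le_card x A
  · simp [Multiset.count_eq_zero_of_notMem hx]

end MultisetEKR

open MultisetEKR in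
/-- Meagher–Purdy: the EKR theorem for multisets. -/
theorem multiset_EKR (k m : ℕ) (hk : 0 < k) (hm : k + 1 ≤ m)
    (F : Set (Multiset ℕ))
    (hF : ∀ A ∈ F, IsKMultisetOf m k A)
    (hint : ∀ A ∈ F, ∀ B ∈ F, A ∩ B ≠ 0) :
    F.ncard ≤ (m + k - 2).choose (k - 1) ∧
    (k + 1 < m →
      (F.ncard = (m + k - 2).choose (k - 1) ↔
        ∃ x ∈ Finset.Icc 1 m, ∀ A : Multiset ℕ,
          A ∈ F ↔ (IsKMultisetOf m k A ∧ x ∈ A))) := by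
  have hfin : F.Finite := (finite_kMultisets m k).subset hF
  lift F to Finset (Multiset ℕ) using hfin
  simp only [Finset.mem_coe] at hF hint ⊢
  rw [Set.ncard_coe_finset]
  have hG := supp_intersecting F hF hint
  have hle := card_le_weighted_sum hm F hF hint
  refine ⟨hle.trans (weighted_sum_le hG hk hm), fun hm' => ⟨fun heq => ?_, ?_⟩⟩
  · have h1 : level (F.image (supp m)) 1 ≠ 0 := fun h0 =>
      (hle.trans_lt (weighted_sum_lt hG hk hm' h0)).ne heq
    obtain ⟨S, hS⟩ := Finset.card_ne_zero.1 h1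
    obtain ⟨hSG, hS1⟩ := Finset.mem_filter.1 hS
    obtain ⟨i, rfl⟩ := Finset.card_eq_one.1 hS1
    have hi : (i : ℕ) + 1 ∈ Finset.Icc 1 m := by
      have := i.isLt
      rw [Finset.mem_Icc]
      omega
    have hsub : (F : Set (Multiset ℕ)) ⊆ {A | IsKMultisetOf m k A ∧ (i : ℕ) + 1 ∈ A} := by
      intro A hA
      refine ⟨hF A hA, ?_⟩
      have := hG hSG (Finset.mem_coe.2 (Finset.mem_image_of_mem _ (Finset.mem_coe.1 hA)))
      rw [Finset.disjoint_singleton_left, not_not] at this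
      exact mem_supp.1 this
    have hstar := Set.eq_of_subset_of_ncard_le hsub
      (by rw [star_ncard hk hi, Set.ncard_coe_finset, heq])
      ((finite_kMultisets m k).subset fun A hA => hA.1)
    exact ⟨(i : ℕ) + 1, hi, fun A => by
      rw [← Finset.mem_coe, hstar, Set.mem_ofPred_eq]⟩
  · rintro ⟨x, hx, h⟩
    rw [← star_ncard hk hx, ← Set.ncard_coe_finset]
    congr 1
    ext A
    exact h A
end

section
/- Let m and k be positive integers and set n = m+k−1. Then there exists a bijection f from the k-subsets of [n] to the k-multisets of [m] such that: (i) for every k-subset B of [n], the support of f(B) equals B ∩ [m]; and (ii) whenever two k-subsets B₁, B₂ of [n] are disjoint, the multisets f(B₁) and f(B₂) are disjoint. -/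
/-!
Both sides are partitioned by a nonempty set `S ⊆ [m]` with `|S| = s ≤ k`: the `k`-subsets `B` of
`[m + k - 1]` according to `S = B ∩ [m]`, the `k`-multisets of `[m]` according to their support.
The set `B` is determined by the `k - s` elements it takes from the `k - 1` elements above `m`,
which leaves `(k - 1).choose (k - s)` choices. A multiset with support `S` is `S` plus an arbitrary
multiset of size `k - s` on `S`, which leaves `s.multichoose (k - s) = (k - 1).choose (k - s)`
choices. Corresponding parts are thus equinumerous, and gluing bijections between them gives the
required map; it preserves disjointness because multisets with disjoint supports are disjoint.
-/

lemma encard_subsets_trace (m k : ℕ) (S : Finset ℕ) (hS : S ⊆ Finset.Icc 1 m)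
    (hSk : S.card ≤ k) :
    {B : Finset ℕ | (B ⊆ Finset.Icc 1 (m + k - 1) ∧ B.card = k) ∧
      B ∩ Finset.Icc 1 m = S}.encard = ((k - 1).choose (k - S.card) : ℕ) := by
  have hdisj : ∀ T ⊆ Finset.Icc (m + 1) (m + k - 1), Disjoint S T := by
    intro T hT
    rw [Finset.disjoint_left]
    intro x hx hx'
    have h1 := Finset.mem_Icc.1 (hS hx)
    have h2 := Finset.mem_Icc.1 (hT hx')
    omega
  have key : {B : Finset ℕ | (B ⊆ Finset.Icc 1 (m + k - 1) ∧ B.card = k) ∧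
      B ∩ Finset.Icc 1 m = S} =
      (((Finset.powersetCard (k - S.card) (Finset.Icc (m + 1) (m + k - 1))).image
        (fun T => S ∪ T) : Finset (Finset ℕ)) : Set (Finset ℕ)) := by
    ext B
    simp only [Set.mem_ofPred_eq, Finset.coe_image, Set.mem_image, Finset.mem_coe,
      Finset.mem_powersetCard]
    constructor
    · rintro ⟨⟨hB, hc⟩, rfl⟩
      refine ⟨B \ Finset.Icc 1 m, ⟨?_, ?_⟩, ?_⟩
      · intro x hx
        rw [Finset.mem_sdiff] at hx
        have h1 := Finset.mem_Icc.1 (hB hx.1)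
        have h2 := hx.2
        rw [Finset.mem_Icc] at h2 ⊢
        omega
      · have := Finset.card_inter_add_card_sdiff B (Finset.Icc 1 m)
        omega
      · ext x
        simp only [Finset.mem_union, Finset.mem_inter, Finset.mem_sdiff]
        tauto
    · rintro ⟨T, ⟨hT, hc⟩, rfl⟩
      refine ⟨⟨?_, ?_⟩, ?_⟩
      · intro x hx
        rcases Finset.mem_union.1 hx with hx | hx
        · have h1 := Finset.mem_Icc.1 (hS hx)
          have : 0 < S.card := Finset.card_pos.2 ⟨x, hx⟩
          rw [Finset.mem_Icc]
          omega
        · have h1 := Finset.mem_Icc.1 (hT hx)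
          rw [Finset.mem_Icc]
          omega
      · rw [Finset.card_union_of_disjoint (hdisj T hT)]
        omega
      · ext x
        simp only [Finset.mem_union, Finset.mem_inter]
        constructor
        · rintro ⟨hx | hx, h⟩
          · exact hx
          · have h1 := Finset.mem_Icc.1 (hT hx)
            have h2 := Finset.mem_Icc.1 h
            omega
        · exact fun hx => ⟨Or.inl hx, hS hx⟩
  rw [key, Set.encard_coe_eq_coe_finsetCard, Finset.card_image_of_injOn,
    Finset.card_powersetCard, Nat.card_Icc]
  · rw [show m + k - 1 + 1 - (m + 1) = k - 1 by omega]
  · intro T hT T' hT' h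
    have hT := hdisj T (Finset.mem_powersetCard.1 hT).1
    have hT' := hdisj T' (Finset.mem_powersetCard.1 hT').1
    simp only at h
    rw [← Finset.union_sdiff_cancel_left hT, h, Finset.union_sdiff_cancel_left hT']

lemma encard_multisets_support (m k : ℕ) (S : Finset ℕ) (hS : S ⊆ Finset.Icc 1 m)
    (hSk : S.card ≤ k) (hne : S.Nonempty) :
    {A : Multiset ℕ | (Multiset.card A = k ∧ ∀ x ∈ A, x ∈ Finset.Icc 1 m) ∧
      A.toFinset = S}.encard = ((k - 1).choose (k - S.card) : ℕ) := by
  have key : {A : Multiset ℕ | (Multiset.card A = k ∧ ∀ x ∈ A, x ∈ Finset.Icc 1 m) ∧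
      A.toFinset = S} =
      Set.range (fun T : Sym S (k - S.card) => S.val + (T : Multiset S).map Subtype.val) := by
    ext A
    simp only [Set.mem_ofPred_eq, Set.mem_range]
    constructor
    · rintro ⟨⟨hc, hA⟩, rfl⟩
      have hle : A.toFinset.val ≤ A := Multiset.dedup_le A
      have hmem : ∀ x ∈ A - A.toFinset.val, x ∈ A.toFinset := fun x hx =>
        Multiset.mem_toFinset.2 (Multiset.mem_of_le (Multiset.sub_le_self _ _) hx)
      refine ⟨⟨(A - A.toFinset.val).attach.map fun x => ⟨x.1, hmem x.1 x.2⟩, ?_⟩, ?_⟩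
      · rw [Multiset.card_map, Multiset.card_attach, Multiset.card_sub hle, hc]
        rfl
      · simp only [Sym.coe_mk, Multiset.map_map, Function.comp_def, Multiset.attach_map_val]
        exact add_tsub_cancel_of_le hle
    · rintro ⟨T, rfl⟩
      have hmem : ∀ x, x ∈ S.val + (T : Multiset S).map Subtype.val ↔ x ∈ S := by
        intro x
        rw [Multiset.mem_add, Multiset.mem_map]
        constructor
        · rintro (h | ⟨y, -, rfl⟩)
          · exact h
          · exact y.2
        · exact fun h => Or.inl h
      refine ⟨⟨?_, fun x hx => hS ((hmem x).1 hx)⟩, ?_⟩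
      · rw [Multiset.card_add, Multiset.card_map, Finset.card_val]
        have : Multiset.card (T : Multiset S) = k - S.card := T.2
        omega
      · ext x
        rw [Multiset.mem_toFinset, hmem]
  have hinj : Function.Injective
      (fun T : Sym S (k - S.card) => S.val + (T : Multiset S).map Subtype.val) := by
    intro T T' h
    exact Sym.coe_injective (Multiset.map_injective Subtype.val_injective (add_left_cancel h))
  have hpos := hne.card_pos
  rw [key, ← Set.image_univ, hinj.encard_image, Set.encard_univ, ENat.card_eq_coe_fintype_card,
    Sym.card_sym_eq_multichoose, Fintype.card_coe, Nat.multichoose_eq]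
  congr 3
  omega

/-- If the fibres of `c` on `A` are finite and equinumerous with the corresponding fibres of `d` on
`B`, then bijections between the fibres glue to a bijection from `A` to `B` carrying `c` to `d`. -/
lemma exists_bijOn_of_encard_fiber_eq {α β ι : Type*} [Nonempty β] (A : Set α) (B : Set β)
    (c : α → ι) (d : β → ι)
    (hfin : ∀ i, {x | x ∈ A ∧ c x = i}.Finite)
    (h : ∀ i, {x | x ∈ A ∧ c x = i}.encard = {y | y ∈ B ∧ d y = i}.encard) :
    ∃ f : α → β, Set.BijOn f A B ∧ ∀ x ∈ A, d (f x) = c x := by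
  choose g hg using fun i => (hfin i).exists_bijOn_of_encard_eq (h i)
  have hmaps : ∀ x ∈ A, g (c x) x ∈ B ∧ d (g (c x) x) = c x := fun x hx =>
    (hg (c x)).mapsTo ⟨hx, rfl⟩
  refine ⟨fun x => g (c x) x, ⟨fun x hx => (hmaps x hx).1, ?_, ?_⟩, fun x hx => (hmaps x hx).2⟩
  · intro x hx y hy hxy
    have hxy : g (c x) x = g (c y) y := hxy
    have hc : c x = c y := by rw [← (hmaps x hx).2, hxy, (hmaps y hy).2]
    rw [← hc] at hxy
    exact (hg (c x)).injOn ⟨hx, rfl⟩ ⟨hy, hc.symm⟩ hxy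
  · intro y hy
    obtain ⟨x, ⟨hx, hcx⟩, hxy⟩ := (hg (d y)).surjOn ⟨hy, rfl⟩
    refine ⟨x, hx, ?_⟩
    simp only [hcx, hxy]


/-- Meagher–Purdy: there is a bijection from the `k`-subsets of `[m+k-1]` to the
`k`-multisets of `[m]` preserving supports in `[m]` and sending disjoint sets to
disjoint multisets (a graph homomorphism from the Kneser graph to the multiset
Kneser graph). -/
theorem exists_multiset_homomorphism (m k : ℕ) (hm : 0 < m) (hk : 0 < k) :
    ∃ f : Finset ℕ → Multiset ℕ,
      Set.BijOn f {B : Finset ℕ | B ⊆ Finset.Icc 1 (m + k - 1) ∧ B.card = k}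
        {A : Multiset ℕ | Multiset.card A = k ∧ ∀ x ∈ A, x ∈ Finset.Icc 1 m} ∧
      (∀ B : Finset ℕ, B ⊆ Finset.Icc 1 (m + k - 1) → B.card = k →
        (f B).toFinset = B ∩ Finset.Icc 1 m) ∧
      (∀ B₁ B₂ : Finset ℕ, B₁ ⊆ Finset.Icc 1 (m + k - 1) → B₁.card = k →
        B₂ ⊆ Finset.Icc 1 (m + k - 1) → B₂.card = k →
        B₁ ∩ B₂ = ∅ → f B₁ ∩ f B₂ = 0) := by
  obtain ⟨f, hf, hsupp⟩ := exists_bijOn_of_encard_fiber_eq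
    {B : Finset ℕ | B ⊆ Finset.Icc 1 (m + k - 1) ∧ B.card = k}
    {A : Multiset ℕ | Multiset.card A = k ∧ ∀ x ∈ A, x ∈ Finset.Icc 1 m}
    (fun B => B ∩ Finset.Icc 1 m) (fun A => A.toFinset)
    (fun S => (Finset.finite_toSet (Finset.Icc 1 (m + k - 1)).powerset).subset
      fun B hB => Finset.mem_coe.2 (Finset.mem_powerset.2 hB.1.1))
    (by
      intro S
      by_cases hS : S ⊆ Finset.Icc 1 m ∧ S.card ≤ k ∧ S.Nonempty
      · exact (encard_subsets_trace m k S hS.1 hS.2.1).trans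
          (encard_multisets_support m k S hS.1 hS.2.1 hS.2.2).symm
      -- For any other `S` both fibres are empty.
      · trans 0
        · rw [Set.encard_eq_zero, Set.eq_empty_iff_forall_notMem]
          rintro B ⟨⟨hB, hc⟩, rfl⟩
          refine hS ⟨Finset.inter_subset_right,
            (Finset.card_le_card Finset.inter_subset_left).trans hc.le, ?_⟩
          -- Only `k - 1` elements of `[m + k - 1]` exceed `m`, so `B` meets `[m]`.
          rw [Finset.nonempty_iff_ne_empty]
          intro hempty
          have hsub : B ⊆ Finset.Icc (m + 1) (m + k - 1) := by
            intro x hx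
            have h1 := Finset.mem_Icc.1 (hB hx)
            have h2 : x ∉ Finset.Icc 1 m := fun h =>
              Finset.notMem_empty x (hempty ▸ Finset.mem_inter.2 ⟨hx, h⟩)
            rw [Finset.mem_Icc] at h2 ⊢
            omega
          have := Finset.card_le_card hsub
          rw [Nat.card_Icc] at this
          omega
        · symm
          rw [Set.encard_eq_zero, Set.eq_empty_iff_forall_notMem]
          rintro A ⟨⟨hc, hA⟩, rfl⟩
          refine hS ⟨fun x hx => hA x (Multiset.mem_toFinset.1 hx),
            (Multiset.toFinset_card_le A).trans hc.le, ?_⟩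
          rw [Multiset.toFinset_nonempty]
          rintro rfl
          simp at hc
          omega)
  refine ⟨f, hf, fun B hB hc => hsupp B ⟨hB, hc⟩, ?_⟩
  intro B₁ B₂ h₁ c₁ h₂ c₂ hdisj
  rw [Multiset.eq_zero_iff_forall_notMem]
  intro x hx
  rw [Multiset.mem_inter, ← Multiset.mem_toFinset, ← Multiset.mem_toFinset,
    hsupp B₁ ⟨h₁, c₁⟩, hsupp B₂ ⟨h₂, c₂⟩] at hx
  exact Finset.notMem_empty x (hdisj ▸ Finset.mem_inter.2
    ⟨(Finset.mem_inter.1 hx.1).1, (Finset.mem_inter.1 hx.2).1⟩)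
end

section
/- Let F be a maximal intersecting family of k-multisets of [m] with m ≥ k+1, i.e., F is intersecting but F ∪ {A} is not intersecting for any k-multiset A of [m] not in F. Then F contains a k-multiset whose support has cardinality k (that is, a multiset with no repeated elements). -/
/-- A maximal intersecting family of `k`-multisets of `[m]` (with `m ≥ k + 1`) contains a
multiset whose support has cardinality `k`, i.e. one with no repeated elements. -/
theorem maximal_intersecting_has_full_support (k m : ℕ) (hk : 0 < k) (hm : k + 1 ≤ m)
    (F : Set (Multiset ℕ))
    (hF : ∀ A ∈ F, IsKMultisetOf m k A)
    (hint : ∀ A ∈ F, ∀ B ∈ F, A ∩ B ≠ 0)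
    (hmax : ∀ A : Multiset ℕ, IsKMultisetOf m k A → A ∉ F → ∃ B ∈ F, A ∩ B = 0) :
    ∃ A ∈ F, A.toFinset.card = k := by
  -- `F` is nonempty: otherwise maximality, applied to `k` copies of `1`, yields a member of `F`.
  obtain ⟨A, hA⟩ : ∃ A, A ∈ F := by
    by_contra! h
    obtain ⟨B, hB, -⟩ := hmax (Multiset.replicate k 1)
      ⟨by simp, fun x hx => by
        rw [Multiset.eq_of_mem_replicate hx, Finset.mem_Icc]; omega⟩ (h _)
    exact h B hB
  obtain ⟨hAc, hAm⟩ := hF A hA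
  -- Extend the support of `A` to a `k`-subset `T` of `[m]`. A common element of `A` and `B` lies in
  -- `T`, so `T` meets every member `B` of `F` and is in `F` by maximality.
  obtain ⟨T, hST, hTm, hTc⟩ := Finset.exists_subsuperset_card_eq
    (s := A.toFinset) (t := Finset.Icc 1 m) (n := k)
    (fun x hx => hAm x (Multiset.mem_toFinset.1 hx))
    (hAc ▸ Multiset.toFinset_card_le A) (by rw [Nat.card_Icc]; omega)
  refine ⟨T.val, ?_, by rw [Finset.val_toFinset, hTc]⟩
  by_contra hT
  obtain ⟨B, hB, hTB⟩ := hmax T.val ⟨hTc, fun x hx => hTm hx⟩ hT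
  obtain ⟨x, hx⟩ := Multiset.exists_mem_of_ne_zero (hint A hA B hB)
  obtain ⟨hxA, hxB⟩ := Multiset.mem_inter.1 hx
  have hxTB : x ∈ T.val ∩ B :=
    Multiset.mem_inter.2 ⟨hST (Multiset.mem_toFinset.2 hxA), hxB⟩
  rw [hTB] at hxTB
  exact Multiset.notMem_zero x hxTB
end

section
/- Let m and k be positive integers, let t ≥ 1, and set n = m+k−1. Then there exists a bijection f from the k-subsets of [n] to the k-multisets of [m] such that: (i) for every k-subset A of [n], the support of f(A) equals A ∩ [m]; and (ii) whenever two k-subsets A₁, A₂ of [n] satisfy |A₁ ∩ A₂| < t, the supports of f(A₁) and f(A₂) have fewer than t elements in common. -/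
/-!
Sort the `k`-subsets `A` of `[m+k-1]` by their trace `S = A ∩ [m]`, and the `k`-multisets of `[m]`
by their support. A `k`-set with trace `S` is `S` together with a `(k-|S|)`-subset of the `k-1`
points above `m`; a `k`-multiset with support `S` is one copy of `S` together with an arbitrary
`(k-|S|)`-multiset on `S`. For `1 ≤ |S| ≤ k` both classes have `(k-1).choose (k-|S|)` members
(`encard_sets`, `encard_multisets`), and otherwise both are empty, so they are in bijection, and
these bijections glue along `S`. The last property is then automatic, since
`(A₁ ∩ [m]) ∩ (A₂ ∩ [m]) ⊆ A₁ ∩ A₂`.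
-/

/-- The `k`-subsets of `[m+k-1]` whose trace on `[m]` is `S`. -/
def traceClass (m k : ℕ) (S : Finset ℕ) : Set (Finset ℕ) :=
  {A | A ⊆ Finset.Icc 1 (m + k - 1) ∧ A.card = k ∧ A ∩ Finset.Icc 1 m = S}

/-- The `k`-multisets whose support is `S`. -/
def supportClass (k : ℕ) (S : Finset ℕ) : Set (Multiset ℕ) :=
  {M | Multiset.card M = k ∧ M.toFinset = S}

lemma encard_sets {m k : ℕ} (hk : 0 < k) {S : Finset ℕ} (hS : S ⊆ Finset.Icc 1 m)
    (hSk : S.card ≤ k) :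
    (traceClass m k S).encard = ((k - 1).choose (k - S.card) : ℕ) := by
  have hS' : ∀ x ∈ S, 1 ≤ x ∧ x ≤ m := fun x hx => Finset.mem_Icc.1 (hS hx)
  have himg : traceClass m k S = (fun T : Finset ℕ => S ∪ T) ''
      (Finset.powersetCard (k - S.card) (Finset.Icc (m + 1) (m + k - 1)) : Set (Finset ℕ)) := by
    ext A
    simp only [traceClass, Set.mem_setOf_eq, Set.mem_image, Finset.mem_coe,
      Finset.mem_powersetCard]
    constructor
    · rintro ⟨hA, hc, rfl⟩
      refine ⟨A \ Finset.Icc 1 m, ⟨?_, ?_⟩, ?_⟩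
      · intro x hx
        have h1 := Finset.mem_sdiff.1 hx
        have h2 := hA h1.1
        simp only [Finset.mem_Icc] at h1 h2 ⊢
        omega
      · have := Finset.card_inter_add_card_sdiff A (Finset.Icc 1 m)
        omega
      · ext x
        simp only [Finset.mem_union, Finset.mem_inter, Finset.mem_sdiff]
        tauto
    · rintro ⟨T, ⟨hT, hc⟩, rfl⟩
      have hT' : ∀ x ∈ T, m + 1 ≤ x ∧ x ≤ m + k - 1 := fun x hx => Finset.mem_Icc.1 (hT hx)
      refine ⟨?_, ?_, ?_⟩
      · intro x hx
        rw [Finset.mem_Icc]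
        rcases Finset.mem_union.1 hx with h | h
        · have := hS' x h
          omega
        · have := hT' x h
          omega
      · rw [Finset.card_union_of_disjoint, hc]
        · omega
        · rw [Finset.disjoint_left]
          intro x h h'
          have := hS' x h
          have := hT' x h'
          omega
      · ext x
        simp only [Finset.mem_inter, Finset.mem_union, Finset.mem_Icc]
        constructor
        · rintro ⟨h | h, h1⟩
          · exact h
          · have := hT' x h
            omega
        · exact fun h => ⟨Or.inl h, hS' x h⟩
  rw [himg, Set.InjOn.encard_image, Set.encard_coe_eq_coe_finsetCard, Finset.card_powersetCard,
    Nat.card_Icc]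
  · congr 2
    omega
  · intro T hT T' hT' h
    simp only [Finset.mem_coe, Finset.mem_powersetCard] at hT hT'
    have key : ∀ T : Finset ℕ, T ⊆ Finset.Icc (m + 1) (m + k - 1) → (S ∪ T) \ S = T := by
      intro T hT
      apply Finset.union_sdiff_cancel_left
      rw [Finset.disjoint_left]
      intro x h h'
      have := hS' x h
      have := Finset.mem_Icc.1 (hT h')
      omega
    rw [← key T hT.1, ← key T' hT'.1]
    exact congrArg (· \ S) h

lemma encard_multisets {k : ℕ} {S : Finset ℕ} (hS : S.Nonempty) (hSk : S.card ≤ k) :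
    (supportClass k S).encard = ((k - 1).choose (k - S.card) : ℕ) := by
  have himg : supportClass k S =
      (fun z : Sym S (k - S.card) => S.val + (z : Multiset S).map Subtype.val) '' Set.univ := by
    ext M
    simp only [supportClass, Set.mem_setOf_eq, Set.mem_image, Set.mem_univ, true_and]
    constructor
    · rintro ⟨hc, rfl⟩
      have hle : M.toFinset.val ≤ M := Multiset.dedup_le M
      have hsub : ∀ x ∈ M - M.toFinset.val, x ∈ M.toFinset := fun x hx =>
        Multiset.mem_toFinset.2 (Multiset.mem_of_le (Multiset.sub_le_self _ _) hx)
      refine ⟨⟨(M - M.toFinset.val).attach.map fun x => ⟨x.1, hsub x.1 x.2⟩, ?_⟩, ?_⟩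
      · rw [Multiset.card_map, Multiset.card_attach, Multiset.card_sub hle, hc]
        rfl
      · simp only [Sym.coe_mk, Multiset.map_map, Function.comp_def, Multiset.attach_map_val]
        exact add_tsub_cancel_of_le hle
    · rintro ⟨z, rfl⟩
      refine ⟨?_, ?_⟩
      · rw [Multiset.card_add, Multiset.card_map, Sym.card_coe]
        exact Nat.add_sub_cancel' hSk
      · ext x
        simp only [Multiset.mem_toFinset, Multiset.mem_add, Finset.mem_val, Multiset.mem_map]
        constructor
        · rintro (h | ⟨y, -, rfl⟩)
          · exact h
          · exact y.2
        · exact Or.inl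
  rw [himg, Set.InjOn.encard_image, Set.encard_univ, ENat.card_eq_coe_fintype_card,
    Sym.card_sym_eq_choose, Fintype.card_coe]
  · have := hS.card_pos
    congr 2
    omega
  · intro z _ z' _ h
    exact Sym.coe_injective
      (Multiset.map_injective Subtype.val_injective (add_left_cancel h))

lemma exists_bijOn_classes {m k : ℕ} (hk : 0 < k) {S : Finset ℕ} (hS : S ⊆ Finset.Icc 1 m) :
    ∃ f : Finset ℕ → Multiset ℕ, Set.BijOn f (traceClass m k S) (supportClass k S) := by
  by_cases h : S.Nonempty ∧ S.card ≤ k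
  · have h1 := encard_sets hk hS h.2
    have hfin : (traceClass m k S).Finite := by
      rw [← Set.encard_lt_top_iff, h1]
      exact ENat.coe_lt_top _
    exact hfin.exists_bijOn_of_encard_eq (h1.trans (encard_multisets h.1 h.2).symm)
  · have h1 : traceClass m k S = ∅ := by
      rw [Set.eq_empty_iff_forall_notMem]
      rintro A ⟨hA, hc, rfl⟩
      refine h ⟨?_, hc ▸ Finset.card_le_card Finset.inter_subset_left⟩
      -- A set missing `[m]` would lie among the `k-1` points above `m`.
      by_contra hne
      rw [Finset.not_nonempty_iff_eq_empty] at hne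
      have hsub : A ⊆ Finset.Icc (m + 1) (m + k - 1) := by
        intro x hx
        have h2 := hA hx
        have h3 : x ∉ Finset.Icc 1 m := fun h' => by
          have := Finset.mem_inter.2 ⟨hx, h'⟩
          simp [hne] at this
        simp only [Finset.mem_Icc] at h2 h3 ⊢
        omega
      have := Finset.card_le_card hsub
      rw [Nat.card_Icc] at this
      omega
    have h2 : supportClass k S = ∅ := by
      rw [Set.eq_empty_iff_forall_notMem]
      rintro M ⟨hc, rfl⟩
      refine h ⟨?_, hc ▸ Multiset.toFinset_card_le M⟩
      rw [Multiset.toFinset_nonempty, ← Multiset.card_pos]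
      omega
    rw [h1, h2]
    exact ⟨fun _ => 0, Set.bijOn_empty _⟩


/-- There is a bijection from the `k`-subsets of `[m+k-1]` to the `k`-multisets of `[m]`
preserving supports in `[m]`, such that sets with fewer than `t` common elements map to
multisets whose supports have fewer than `t` common elements. -/
theorem exists_multiset_t_homomorphism (m k t : ℕ) (hm : 0 < m) (hk : 0 < k) (ht : 1 ≤ t) :
    ∃ f : Finset ℕ → Multiset ℕ,
      Set.BijOn f {A : Finset ℕ | A ⊆ Finset.Icc 1 (m + k - 1) ∧ A.card = k}
        {A : Multiset ℕ | Multiset.card A = k ∧ ∀ x ∈ A, x ∈ Finset.Icc 1 m} ∧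
      (∀ A : Finset ℕ, A ⊆ Finset.Icc 1 (m + k - 1) → A.card = k →
        (f A).toFinset = A ∩ Finset.Icc 1 m) ∧
      (∀ A₁ A₂ : Finset ℕ, A₁ ⊆ Finset.Icc 1 (m + k - 1) → A₁.card = k →
        A₂ ⊆ Finset.Icc 1 (m + k - 1) → A₂.card = k →
        (A₁ ∩ A₂).card < t → ((f A₁).toFinset ∩ (f A₂).toFinset).card < t) := by
  have H : ∀ S : Finset ℕ, ∃ f : Finset ℕ → Multiset ℕ, S ⊆ Finset.Icc 1 m →
      Set.BijOn f (traceClass m k S) (supportClass k S) := by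
    intro S
    by_cases hS : S ⊆ Finset.Icc 1 m
    · obtain ⟨f, hf⟩ := exists_bijOn_classes hk hS
      exact ⟨f, fun _ => hf⟩
    · exact ⟨fun _ => 0, fun h => absurd h hS⟩
  choose g hg using H
  have hmaps : ∀ A : Finset ℕ, A ⊆ Finset.Icc 1 (m + k - 1) → A.card = k →
      g (A ∩ Finset.Icc 1 m) A ∈ supportClass k (A ∩ Finset.Icc 1 m) := fun A hA hc =>
    (hg _ Finset.inter_subset_right).mapsTo ⟨hA, hc, rfl⟩
  refine ⟨fun A => g (A ∩ Finset.Icc 1 m) A, ⟨?_, ?_, ?_⟩, ?_, ?_⟩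
  · rintro A ⟨hA, hc⟩
    obtain ⟨h1, h2⟩ := hmaps A hA hc
    refine ⟨h1, fun x hx => ?_⟩
    rw [← Multiset.mem_toFinset, h2] at hx
    exact (Finset.mem_inter.1 hx).2
  · rintro A ⟨hA, hc⟩ B ⟨hB, hc'⟩ h
    dsimp only at h
    have hAB : B ∩ Finset.Icc 1 m = A ∩ Finset.Icc 1 m := by
      rw [← (hmaps A hA hc).2, ← (hmaps B hB hc').2, h]
    rw [hAB] at h
    exact (hg _ Finset.inter_subset_right).injOn ⟨hA, hc, rfl⟩ ⟨hB, hc', hAB⟩ h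
  · rintro M ⟨hc, hM⟩
    have hS : M.toFinset ⊆ Finset.Icc 1 m := fun x hx => hM x (Multiset.mem_toFinset.1 hx)
    obtain ⟨A, ⟨hA, hcA, hAS⟩, hAM⟩ := (hg _ hS).surjOn ⟨hc, rfl⟩
    refine ⟨A, ⟨hA, hcA⟩, ?_⟩
    dsimp only
    rw [hAS, hAM]
  · exact fun A hA hc => (hmaps A hA hc).2
  · intro A B hA hc hB hc' hlt
    dsimp only
    rw [(hmaps A hA hc).2, (hmaps B hB hc').2]
    exact (Finset.card_le_card
      (Finset.inter_subset_inter Finset.inter_subset_left Finset.inter_subset_left)).trans_lt hlt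
end

section
/- Let 1 ≤ t ≤ k and m ≥ 2k−t, and let F be a t-intersecting family of k-multisets of [m]. Let T be a t-kernel for F containing [m], let i ∈ [m] have multiplicity s = m(i,T) ≥ 2 in T, and let j ∈ [m]. If the shifted family S_{(i,s)(j)}(F) is obtained from M_r = { G a k-multiset of [m] : |G ∩ [t+2r]| ≥ t+r } by a permutation of [m] for some r > 0, then F itself is obtained from M_r by a permutation of [m]; in fact S_{(i,s)(j)}(F) = F. -/
/-- The multiset `A_{(i,s)(j)}`: if `s ≤ m(i,A)`, replace all but `s - 1` of the copies of
`i` in `A` by copies of `j`; otherwise leave `A` unchanged. -/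
def shiftMul (i s j : ℕ) (A : Multiset ℕ) : Multiset ℕ :=
  if s ≤ A.count i then
    A - Multiset.replicate (A.count i - (s - 1)) i + Multiset.replicate (A.count i - (s - 1)) j
  else A

open Classical in
/-- The shifting (down-compression) operation `S_{(i,s)(j)}` on a family `F`:
a member `A` is replaced by `A_{(i,s)(j)}` when `j ∉ A` and `A_{(i,s)(j)} ∉ F`,
and is kept unchanged otherwise. -/
noncomputable def shiftFam (i s j : ℕ) (F : Set (Multiset ℕ)) : Set (Multiset ℕ) :=
  (fun A => if j ∉ A ∧ shiftMul i s j A ∉ F then shiftMul i s j A else A) '' F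

/-- The family `M_r` of all `k`-multisets of `[m]` whose intersection with the set
`[t + 2r]` (each element with multiplicity one) has cardinality at least `t + r`. -/
def MFam (m k t r : ℕ) : Set (Multiset ℕ) :=
  {G | IsKMultisetOf m k G ∧ t + r ≤ Multiset.card (G ∩ (Finset.Icc 1 (t + 2 * r)).val)}

/-- `F` is obtained from `F₀` by a permutation of `[m]`. -/
def IsPermOf (m : ℕ) (F F₀ : Set (Multiset ℕ)) : Prop :=
  ∃ σ : Equiv.Perm ℕ, (∀ x ∉ Finset.Icc 1 m, σ x = x) ∧
    F = (fun A : Multiset ℕ => A.map σ) '' F₀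

lemma card_inter_val (A : Multiset ℕ) (X : Finset ℕ) :
    Multiset.card (A ∩ X.val) = (A.toFinset ∩ X).card := by
  have h : A ∩ X.val = (A.toFinset ∩ X).val := by
    ext x
    have hn := (A.toFinset ∩ X).nodup
    rw [Multiset.count_inter, Multiset.count_eq_of_nodup X.nodup, Multiset.count_eq_of_nodup hn]
    by_cases hA : x ∈ A
    · have := Multiset.one_le_count_iff_mem.mpr hA
      by_cases hX : x ∈ X <;> simp [hA, hX] ; omega
    · simp [hA]
  rw [h, Finset.card_val]

lemma perm_mem_Icc {m : ℕ} {σ : Equiv.Perm ℕ} (hσ : ∀ x ∉ Finset.Icc 1 m, σ x = x) (x : ℕ) :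
    σ x ∈ Finset.Icc 1 m ↔ x ∈ Finset.Icc 1 m := by
  constructor
  · intro h
    by_contra hx
    rw [hσ x hx] at h
    exact hx h
  · intro h
    by_contra hx
    have := σ.injective (hσ _ hx)
    rw [this] at hx
    exact hx h

/-- A permuted copy of `M_r` is described by the size of the intersection of the support with the
image of `[t + 2r]`. -/
lemma mem_image_MFam {m k t r : ℕ} {σ : Equiv.Perm ℕ} (hσ : ∀ x ∉ Finset.Icc 1 m, σ x = x)
    (G : Multiset ℕ) :
    G ∈ (fun A : Multiset ℕ => A.map σ) '' MFam m k t r ↔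
      IsKMultisetOf m k G ∧
        t + r ≤ (G.toFinset ∩ (Finset.Icc 1 (t + 2 * r)).image σ).card := by
  have key : ∀ B : Multiset ℕ, B ∈ MFam m k t r ↔ IsKMultisetOf m k (B.map σ) ∧
      t + r ≤ ((B.map σ).toFinset ∩ (Finset.Icc 1 (t + 2 * r)).image σ).card := by
    intro B
    have h1 : IsKMultisetOf m k (B.map σ) ↔ IsKMultisetOf m k B := by
      simp only [IsKMultisetOf, Multiset.card_map, Multiset.mem_map, forall_exists_index, and_imp,
        forall_apply_eq_imp_iff₂, perm_mem_Icc hσ]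
    rw [h1, Multiset.toFinset_map, ← Finset.image_inter _ _ σ.injective,
      Finset.card_image_of_injective _ σ.injective, ← card_inter_val]
    rfl
  constructor
  · rintro ⟨B, hB, rfl⟩
    exact (key B).mp hB
  · intro h
    have hG : (G.map σ.symm).map σ = G := by simp [Multiset.map_map]
    refine ⟨G.map σ.symm, (key _).mpr ?_, hG⟩
    rw [hG]
    exact h

/-- Since `s ≥ 2`, at least one copy of `i` survives the replacement. -/
lemma mem_shiftMul {i s j : ℕ} {A : Multiset ℕ} (hs2 : 2 ≤ s)
    (hsA : s ≤ A.count i) : i ∈ shiftMul i s j A := by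
  rw [← Multiset.one_le_count_iff_mem, shiftMul, if_pos hsA]
  simp only [Multiset.count_add, Multiset.count_sub, Multiset.count_replicate_self]
  omega

lemma toFinset_shiftMul_subset (i s j : ℕ) (A : Multiset ℕ) :
    (shiftMul i s j A).toFinset ⊆ insert j A.toFinset := by
  intro x hx
  rw [Multiset.mem_toFinset, shiftMul] at hx
  rw [Finset.mem_insert, Multiset.mem_toFinset]
  split_ifs at hx with h
  · rcases Multiset.mem_add.mp hx with h1 | h1
    · exact Or.inr (Multiset.mem_of_le (Multiset.sub_le_self _ _) h1)
    · exact Or.inl (Multiset.eq_of_mem_replicate h1)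
  · exact Or.inr hx

/-- If the shifted family is a permuted copy of `M_r` with `r > 0`, no member of `F` is moved. -/
lemma shift_fixes (t k m i j s r : ℕ)
    (ht : 1 ≤ t) (hm : 2 * k ≤ m + t) (F : Set (Multiset ℕ))
    (hF : ∀ A ∈ F, IsKMultisetOf m k A)
    (hint : ∀ A ∈ F, ∀ B ∈ F, t ≤ Multiset.card (A ∩ B))
    (hs2 : 2 ≤ s) (hr : 0 < r)
    (hshift : IsPermOf m (shiftFam i s j F) (MFam m k t r))
    (A : Multiset ℕ) (hA : A ∈ F) (hj : j ∉ A) : shiftMul i s j A ∈ F := by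
  classical
  by_contra hnF
  obtain ⟨σ, hσ, hS⟩ := hshift
  have hsA : s ≤ A.count i := by
    by_contra h
    rw [shiftMul, if_neg h] at hnF
    exact hnF hA
  have hiA : i ∈ A := Multiset.one_le_count_iff_mem.mp (by omega)
  have hA'S : shiftMul i s j A ∈ shiftFam i s j F := ⟨A, hA, if_pos ⟨hj, hnF⟩⟩
  have hmemj : ∀ B : Multiset ℕ, s ≤ B.count i → j ∈ shiftMul i s j B := by
    intro B h
    rw [shiftMul, if_pos h, Multiset.mem_add]
    exact Or.inr (Multiset.mem_replicate.mpr ⟨by omega, rfl⟩)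
  -- `A` is not in the shifted family: moved members contain `j`, and `A` itself is moved.
  have hAS : A ∉ shiftFam i s j F := by
    rintro ⟨B, hB, hBA⟩
    dsimp only at hBA
    split_ifs at hBA with h
    · by_cases hsB : s ≤ B.count i
      · exact hj (hBA ▸ hmemj B hsB)
      · rw [shiftMul, if_neg hsB] at h
        exact h.2 hB
    · subst hBA
      exact h ⟨hj, hnF⟩
  -- Members of the shifted family without `i` were not moved.
  have hback : ∀ G ∈ shiftFam i s j F, i ∉ G → G ∈ F := by
    rintro G ⟨B, hB, hBG⟩ hiG
    dsimp only at hBG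
    split_ifs at hBG with h
    · by_cases hsB : s ≤ B.count i
      · exact absurd (hBG ▸ mem_shiftMul hs2 hsB) hiG
      · rw [shiftMul, if_neg hsB] at h
        exact absurd hB h.2
    · exact hBG ▸ hB
  rw [hS, mem_image_MFam hσ] at hA'S hAS
  obtain ⟨⟨hcard', -⟩, hA'X⟩ := hA'S
  have hAX : (A.toFinset ∩ (Finset.Icc 1 (t + 2 * r)).image σ).card < t + r := by
    by_contra h
    exact hAS ⟨hF A hA, not_lt.mp h⟩
  set X := (Finset.Icc 1 (t + 2 * r)).image σ with hX
  have hXcard : X.card = t + 2 * r := by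
    rw [hX, Finset.card_image_of_injective _ σ.injective, Nat.card_Icc]
    omega
  have hk : t + r ≤ k := by
    calc t + r ≤ _ := hA'X
      _ ≤ (shiftMul i s j A).toFinset.card := Finset.card_le_card Finset.inter_subset_left
      _ ≤ _ := Multiset.toFinset_card_le _
      _ = k := hcard'
  have hXm : ∀ x ∈ X, x ∈ Finset.Icc 1 m := by
    intro x hx
    obtain ⟨y, hy, rfl⟩ := Finset.mem_image.mp hx
    rw [perm_mem_Icc hσ]
    rw [Finset.mem_Icc] at hy ⊢
    omega
  have hjX : j ∈ X := by
    by_contra h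
    have : (shiftMul i s j A).toFinset ∩ X ⊆ A.toFinset ∩ X := by
      intro x hx
      rw [Finset.mem_inter] at hx ⊢
      rcases Finset.mem_insert.mp (toFinset_shiftMul_subset i s j A hx.1) with e | e
      · exact absurd (e ▸ hx.2) h
      · exact ⟨e, hx.2⟩
    have := Finset.card_le_card this
    omega
  have hAXge : t + r ≤ (A.toFinset ∩ X).card + 1 := by
    have : (shiftMul i s j A).toFinset ∩ X ⊆ insert j (A.toFinset ∩ X) := by
      intro x hx
      rw [Finset.mem_inter] at hx
      rw [Finset.mem_insert, Finset.mem_inter]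
      rcases Finset.mem_insert.mp (toFinset_shiftMul_subset i s j A hx.1) with e | e
      · exact Or.inl e
      · exact Or.inr ⟨e, hx.2⟩
    have := Finset.card_le_card this
    have := Finset.card_insert_le j (A.toFinset ∩ X)
    omega
  -- `r > 0` leaves room to choose `t - 1` points of the support of `A` in `X` other than `i`.
  obtain ⟨W, hWsub, hWcard⟩ : ∃ W ⊆ (A.toFinset ∩ X).erase i, W.card = t - 1 := by
    apply Finset.exists_subset_card_eq
    have := Finset.pred_card_le_card_erase (s := A.toFinset ∩ X) (a := i)
    omega
  have hW : ∀ x ∈ W, x ≠ i ∧ x ∈ A ∧ x ∈ X := by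
    intro x hx
    simpa using hWsub hx
  have hYcard : (X \ A.toFinset).card = r + 1 := by
    have := Finset.card_sdiff_add_card_inter X A.toFinset
    rw [Finset.inter_comm] at this
    omega
  have hdisj : Disjoint (X \ A.toFinset) W := by
    rw [Finset.disjoint_left]
    intro x hx hxW
    exact (Finset.mem_sdiff.mp hx).2 (Multiset.mem_toFinset.mpr (hW x hxW).2.1)
  set Z := (X \ A.toFinset) ∪ W with hZ
  have hZcard : Z.card = t + r := by
    rw [hZ, Finset.card_union_of_disjoint hdisj]
    omega
  have hZX : Z ⊆ X := by
    intro x hx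
    rcases Finset.mem_union.mp hx with h | h
    · exact (Finset.mem_sdiff.mp h).1
    · exact (hW x h).2.2
  have hiZ : i ∉ Z := by
    intro h
    rcases Finset.mem_union.mp h with h | h
    · exact (Finset.mem_sdiff.mp h).2 (Multiset.mem_toFinset.mpr hiA)
    · exact (hW i h).1 rfl
  have hij : i ≠ j := fun e => hj (e ▸ hiA)
  -- The padding uses only `j`, which is not in `A`, so it adds nothing to `A ∩ G`.
  set G : Multiset ℕ := Z.val + Multiset.replicate (k - (t + r)) j with hG
  have hGmem : ∀ x ∈ G, x ∈ Z ∨ x = j := by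
    intro x hx
    rcases Multiset.mem_add.mp hx with h | h
    · exact Or.inl h
    · exact Or.inr (Multiset.eq_of_mem_replicate h)
  have hGF : G ∈ F := by
    apply hback
    · rw [hS, mem_image_MFam hσ]
      refine ⟨⟨?_, ?_⟩, ?_⟩
      · rw [hG, Multiset.card_add, Multiset.card_replicate, Finset.card_val]
        omega
      · intro x hx
        rcases hGmem x hx with h | h
        · exact hXm x (hZX h)
        · exact h ▸ hXm j hjX
      · rw [← hX, ← hZcard]
        apply Finset.card_le_card
        intro x hx
        exact Finset.mem_inter.mpr
          ⟨Multiset.mem_toFinset.mpr (Multiset.mem_add.mpr (Or.inl hx)), hZX hx⟩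
    · intro h
      rcases hGmem i h with h | h
      · exact hiZ h
      · exact hij h
  have hle : A ∩ G ≤ W.val := by
    rw [Multiset.le_iff_count]
    intro x
    rw [Multiset.count_inter]
    by_cases hxA : x ∈ A
    · have hxj : x ≠ j := fun e => hj (e ▸ hxA)
      rw [hG, Multiset.count_add, Multiset.count_replicate, if_neg (Ne.symm hxj), add_zero,
        Multiset.count_eq_of_nodup Z.nodup, Multiset.count_eq_of_nodup W.nodup]
      have : x ∈ Z.val → x ∈ W.val := by
        intro h
        rcases Finset.mem_union.mp (Finset.mem_val.mp h) with h | h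
        · exact absurd (Multiset.mem_toFinset.mpr hxA) (Finset.mem_sdiff.mp h).2
        · exact h
      split_ifs with h1 h2 h2
      · exact min_le_right _ _
      · exact absurd (this h1) h2
      · exact Nat.zero_le _ |>.trans' (min_le_right _ _)
      · exact min_le_right _ _
    · rw [Multiset.count_eq_zero_of_notMem hxA]
      simp
  have h1 := Multiset.card_le_card hle
  have h2 := hint A hA G hGF
  rw [Finset.card_val] at h1
  omega

/-- Down-compression preserves the structure `M_r` for `r > 0`: if the shifted family is a
permuted copy of `M_r`, then so was `F`; in fact the shift did nothing. -/
theorem shift_preserves_MFam_structure (t k m i j s r : ℕ)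
    (ht : 1 ≤ t) (htk : t ≤ k) (hm : 2 * k ≤ m + t)
    (F : Set (Multiset ℕ))
    (hF : ∀ A ∈ F, IsKMultisetOf m k A)
    (hint : ∀ A ∈ F, ∀ B ∈ F, t ≤ Multiset.card (A ∩ B))
    (T : Multiset ℕ) (hTm : (Finset.Icc 1 m).val ≤ T)
    (hker : ∀ A ∈ F, ∀ B ∈ F, t ≤ Multiset.card (A ∩ B ∩ T))
    (hi : i ∈ Finset.Icc 1 m) (hj : j ∈ Finset.Icc 1 m)
    (hs : s = T.count i) (hs2 : 2 ≤ s)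
    (hr : 0 < r)
    (hshift : IsPermOf m (shiftFam i s j F) (MFam m k t r)) :
    IsPermOf m F (MFam m k t r) ∧ shiftFam i s j F = F := by
  have heq : shiftFam i s j F = F := by
    have h : ∀ A ∈ F, ¬ (j ∉ A ∧ shiftMul i s j A ∉ F) := fun A hA h =>
      h.2 (shift_fixes t k m i j s r ht hm F hF hint hs2 hr hshift A hA h.1)
    ext B
    constructor
    · rintro ⟨A, hA, rfl⟩
      simpa only [if_neg (h A hA)] using hA
    · intro hB
      exact ⟨B, hB, if_neg (h B hB)⟩
  exact ⟨heq ▸ hshift, heq⟩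
end

section
/- Let 1 ≤ t ≤ k and m ≥ 2k−t, and let F be a t-intersecting family of k-multisets of [m]. Let T be a t-kernel for F containing [m], let i ∈ [m] have multiplicity s = m(i,T) ≥ 2 in T, and let j ∈ [m]. If the shifted family S_{(i,s)(j)}(F) consists of all k-multisets of [m] containing a fixed t-multiset X, then F consists of all k-multisets of [m] containing X, or F consists of all k-multisets of [m] containing the t-multiset obtained from X by removing one copy of j and adding one copy of i. -/
/-- When the shift acts nontrivially on `B`, it leaves exactly `s - 1` copies of `i`, turns the
others into copies of `j`, and changes no other multiplicity. -/
lemma count_shiftMul {i s j : ℕ} (hij : i ≠ j) {B : Multiset ℕ} (hjB : B.count j = 0)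
    (hsB : s ≤ B.count i) (l : ℕ) :
    (shiftMul i s j B).count l =
      if l = i then B.count i - (B.count i - (s - 1))
      else if l = j then B.count i - (s - 1) else B.count l := by
  unfold shiftMul
  rw [if_pos hsB, Multiset.count_add, Multiset.count_sub, Multiset.count_replicate,
    Multiset.count_replicate]
  grind

lemma shiftMul_isKMultisetOf {m k i s j : ℕ} (hj : j ∈ Finset.Icc 1 m) {B : Multiset ℕ}
    (hB : IsKMultisetOf m k B) : IsKMultisetOf m k (shiftMul i s j B) := by
  unfold shiftMul
  split_ifs with h
  · have hle : Multiset.replicate (B.count i - (s - 1)) i ≤ B :=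
      Multiset.le_count_iff_replicate_le.mp (Nat.sub_le _ _)
    refine ⟨?_, fun x hx => ?_⟩
    · have h2 := Multiset.card_le_card hle
      rw [Multiset.card_add, Multiset.card_sub hle]
      simp only [Multiset.card_replicate] at h2 ⊢
      rw [Nat.sub_add_cancel h2]
      exact hB.1
    · rcases Multiset.mem_add.mp hx with hx | hx
      · exact hB.2 x (Multiset.mem_of_le (Multiset.sub_le_self _ _) hx)
      · rw [Multiset.eq_of_mem_replicate hx]
        exact hj
  · exact hB

/-- The hypotheses put `A ∩ B` inside `X` with one copy of `j` removed, so it has fewer than `t`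
elements, and `A` cannot be in a `t`-intersecting family with `B`. -/
lemma not_mem_of_inter_small {t j : ℕ} {F : Set (Multiset ℕ)}
    (hint : ∀ A ∈ F, ∀ B ∈ F, t ≤ Multiset.card (A ∩ B))
    {X : Multiset ℕ} (hX : Multiset.card X = t) (hjX : j ∈ X) {A B : Multiset ℕ} (hB : B ∈ F)
    (hjB : B.count j = 0) (hl : ∀ l, l ≠ j → min (A.count l) (B.count l) ≤ X.count l) :
    A ∉ F := by
  intro hA
  have h1 := hint A hA B hB
  have h2 : A ∩ B ≤ X.erase j := by
    rw [Multiset.le_iff_count]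
    intro l
    rw [Multiset.count_inter]
    by_cases h : l = j
    · subst h
      rw [hjB]
      simp
    · rw [Multiset.count_erase_of_ne h]
      exact hl l h
  have h3 := Multiset.card_le_card h2
  have h4 := Multiset.card_erase_lt_of_mem hjX
  omega


/-- If down-compression produces the family of all `k`-multisets of `[m]` containing a fixed
`t`-multiset `X`, then the original family consists of all `k`-multisets containing `X`, or
of all `k`-multisets containing the `t`-multiset obtained from `X` by removing one copy of
`j` and adding one copy of `i`. -/
theorem shift_preserves_fixed_kernel_structure (t k m i j s : ℕ)
    (ht : 1 ≤ t) (htk : t ≤ k) (hm : 2 * k ≤ m + t)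
    (F : Set (Multiset ℕ))
    (hF : ∀ A ∈ F, IsKMultisetOf m k A)
    (hint : ∀ A ∈ F, ∀ B ∈ F, t ≤ Multiset.card (A ∩ B))
    (T : Multiset ℕ) (hTm : (Finset.Icc 1 m).val ≤ T)
    (hker : ∀ A ∈ F, ∀ B ∈ F, t ≤ Multiset.card (A ∩ B ∩ T))
    (hi : i ∈ Finset.Icc 1 m) (hj : j ∈ Finset.Icc 1 m)
    (hs : s = T.count i) (hs2 : 2 ≤ s)
    (X : Multiset ℕ) (hX : Multiset.card X = t)
    (hshift : ∀ A : Multiset ℕ,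
      A ∈ shiftFam i s j F ↔ (IsKMultisetOf m k A ∧ X ≤ A)) :
    (∀ A : Multiset ℕ, A ∈ F ↔ (IsKMultisetOf m k A ∧ X ≤ A)) ∨
    (∀ A : Multiset ℕ, A ∈ F ↔ (IsKMultisetOf m k A ∧ (i ::ₘ X.erase j) ≤ A)) := by
  have hFG : ∀ A ∈ F, (j ∉ A ∧ shiftMul i s j A ∉ F → X ≤ shiftMul i s j A) ∧
      (¬(j ∉ A ∧ shiftMul i s j A ∉ F) → X ≤ A) := by
    intro A hA
    have h1 := (hshift _).1 ⟨A, hA, rfl⟩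
    refine ⟨fun h => ?_, fun h => ?_⟩
    · simp only [if_pos h] at h1
      exact h1.2
    · simp only [if_neg h] at h1
      exact h1.2
  have hGF : ∀ A, IsKMultisetOf m k A → X ≤ A → A ∉ F →
      ∃ B ∈ F, j ∉ B ∧ s ≤ B.count i ∧ shiftMul i s j B = A := by
    intro A hA hXA hAF
    obtain ⟨B, hB, hBA⟩ := (hshift A).2 ⟨hA, hXA⟩
    dsimp only at hBA
    split_ifs at hBA with h
    · refine ⟨B, hB, h.1, ?_, hBA⟩
      by_contra hlt
      rw [shiftMul, if_neg hlt] at hBA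
      exact hAF (hBA ▸ hB)
    · exact absurd (hBA ▸ hB) hAF
  by_cases hij : i = j
  · -- Here the shift is the identity: a set without `j = i` has fewer than `s` copies of `i`.
    left
    have hid : ∀ A, j ∉ A → shiftMul i s j A = A := by
      intro A hA
      rw [shiftMul, if_neg]
      rw [hij, Multiset.count_eq_zero_of_notMem hA]
      omega
    refine fun A => ⟨fun hA => ⟨hF A hA, (hFG A hA).2 fun h => h.2 ((hid A h.1).symm ▸ hA)⟩, ?_⟩
    rintro ⟨hA, hXA⟩
    by_contra hAF
    obtain ⟨B, hB, hjB, -, hBA⟩ := hGF A hA hXA hAF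
    exact hAF (hBA ▸ (hid B hjB).symm ▸ hB)
  by_cases hM : ∃ B ∈ F, j ∉ B ∧ s ≤ B.count i ∧ shiftMul i s j B ∉ F
  swap
  · left
    refine fun A => ⟨fun hA => ⟨hF A hA, (hFG A hA).2 fun h => ?_⟩, ?_⟩
    · by_cases hsA : s ≤ A.count i
      · exact hM ⟨A, hA, h.1, hsA, h.2⟩
      · apply h.2
        rwa [shiftMul, if_neg hsA]
    · rintro ⟨hA, hXA⟩
      by_contra hAF
      obtain ⟨B, hB, hjB, hsB, hBA⟩ := hGF A hA hXA hAF
      exact hM ⟨B, hB, hjB, hsB, hBA ▸ hAF⟩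
  right
  obtain ⟨B, hB, hjB, hsB, hBF⟩ := hM
  have hjB0 : B.count j = 0 := Multiset.count_eq_zero_of_notMem hjB
  have hXB' : X ≤ shiftMul i s j B := (hFG B hB).1 ⟨hjB, hBF⟩
  -- A moved set is not a member of the shifted family.
  have hXB : ¬ X ≤ B := by
    intro h
    obtain ⟨C, hC, hCB⟩ := (hshift B).2 ⟨hF B hB, h⟩
    dsimp only at hCB
    split_ifs at hCB with hc
    · by_cases hsC : s ≤ C.count i
      · have h1 := count_shiftMul hij (Multiset.count_eq_zero_of_notMem hc.1) hsC j
        rw [hCB, hjB0, if_neg (Ne.symm hij), if_pos rfl] at h1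
        omega
      · apply hc.2
        rwa [shiftMul, if_neg hsC]
    · subst hCB
      exact hc ⟨hjB, hBF⟩
  have hjX : j ∈ X := by
    by_contra hjX
    apply hXB
    rw [Multiset.le_iff_count] at hXB' ⊢
    intro l
    have h1 := hXB' l
    rw [count_shiftMul hij hjB0 hsB] at h1
    have h2 := Multiset.count_eq_zero_of_notMem hjX
    grind
  have hjX1 : 1 ≤ X.count j := Multiset.one_le_count_iff_mem.mpr hjX
  have hXm : ∀ x ∈ X, x ∈ Finset.Icc 1 m := fun x hx =>
    (shiftMul_isKMultisetOf hj (hF B hB)).2 x (Multiset.mem_of_le hXB' hx)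
  -- The multiset `A₀ = X + (k - t)·j` is the shift of a moved set `C`.
  obtain ⟨C, hC, hjC, hsC, hCA⟩ : ∃ C ∈ F, j ∉ C ∧ s ≤ C.count i ∧
      shiftMul i s j C = X + Multiset.replicate (k - t) j := by
    apply hGF
    · refine ⟨?_, fun x hx => ?_⟩
      · rw [Multiset.card_add, Multiset.card_replicate]
        omega
      · rcases Multiset.mem_add.mp hx with hx | hx
        · exact hXm x hx
        · rw [Multiset.eq_of_mem_replicate hx]
          exact hj
    · exact Multiset.le_add_right _ _
    · apply not_mem_of_inter_small hint hX hjX hB hjB0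
      intro l hl
      rw [Multiset.count_add, Multiset.count_replicate, if_neg (Ne.symm hl)]
      omega
  have hjC0 : C.count j = 0 := Multiset.count_eq_zero_of_notMem hjC
  have hCc : ∀ l, (if l = i then C.count i - (C.count i - (s - 1))
      else if l = j then C.count i - (s - 1) else C.count l) =
      X.count l + if j = l then k - t else 0 := by
    intro l
    rw [← count_shiftMul hij hjC0 hsC, hCA, Multiset.count_add, Multiset.count_replicate]
  have hXi : X.count i = s - 1 := by
    have := hCc i
    grind
  have hCl : ∀ l, l ≠ i → l ≠ j → C.count l = X.count l := by
    intro l h1 h2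
    have := hCc l
    grind
  -- Since `T` has only `s = m(i,X) + 1` copies of `i`, the set `C ∩ T` is inside `X` with one `i`
  -- added and all copies of `j` removed; so there is only one such copy.
  have hXj : X.count j = 1 := by
    by_contra hne
    have h1 := hker C hC C hC
    have h2 : C ∩ C ∩ T ≤ ((i ::ₘ X).erase j).erase j := by
      rw [Multiset.le_iff_count]
      intro l
      rw [Multiset.count_inter, Multiset.count_inter]
      by_cases hlj : l = j
      · subst hlj
        rw [hjC0]
        simp
      · rw [Multiset.count_erase_of_ne hlj, Multiset.count_erase_of_ne hlj, Multiset.count_cons]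
        by_cases hli : l = i
        · subst hli
          rw [if_pos rfl]
          omega
        · have := hCl l hli hlj
          omega
    have h3 := Multiset.card_le_card h2
    have h4 : j ∈ i ::ₘ X := Multiset.mem_cons_of_mem hjX
    have h5 : j ∈ (i ::ₘ X).erase j := by
      rw [← Multiset.one_le_count_iff_mem, Multiset.count_erase_self,
        Multiset.count_cons_of_ne (Ne.symm hij)]
      omega
    rw [Multiset.card_erase_of_mem h5, Multiset.card_erase_of_mem h4, Multiset.card_cons] at h3
    simp only [Nat.pred_eq_sub_one] at h3
    omega
  have hno : ∀ D, D.count i ≤ s - 1 → D ∉ F := by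
    intro D hD
    apply not_mem_of_inter_small hint hX hjX hC hjC0
    intro l hlj
    by_cases hli : l = i
    · subst hli
      omega
    · have := hCl l hli hlj
      omega
  have hX' : ∀ A : Multiset ℕ, i ::ₘ X.erase j ≤ A ↔
      s ≤ A.count i ∧ ∀ l, l ≠ i → l ≠ j → X.count l ≤ A.count l := by
    intro A
    have hc : ∀ l, (i ::ₘ X.erase j).count l =
        if l = i then s else if l = j then 0 else X.count l := by
      intro l
      rw [Multiset.count_cons]
      by_cases hlj : l = j
      · subst hlj
        rw [Multiset.count_erase_self]
        grind
      · rw [Multiset.count_erase_of_ne hlj]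
        grind
    rw [Multiset.le_iff_count]
    refine ⟨fun h => ⟨?_, fun l h1 h2 => ?_⟩, fun h l => ?_⟩
    · have := h i
      rw [hc] at this
      grind
    · have := h l
      rw [hc] at this
      grind
    · rw [hc]
      grind
  refine fun A => ⟨fun hA => ⟨hF A hA, ?_⟩, ?_⟩
  · have hsA : s ≤ A.count i := by
      by_contra h
      exact hno A (by omega) hA
    rw [hX']
    refine ⟨hsA, fun l hli hlj => ?_⟩
    by_cases h : j ∉ A ∧ shiftMul i s j A ∉ F
    · have h1 := Multiset.le_iff_count.1 ((hFG A hA).1 h) l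
      rwa [count_shiftMul hij (Multiset.count_eq_zero_of_notMem h.1) hsA, if_neg hli,
        if_neg hlj] at h1
    · exact Multiset.le_iff_count.1 ((hFG A hA).2 h) l
  · rintro ⟨hA, hXA⟩
    rw [hX'] at hXA
    obtain ⟨hsA, hlA⟩ := hXA
    by_cases hjA : j ∈ A
    · -- `A` is in the shifted family and has too many copies of `i` to be a proper shift.
      by_contra hAF
      have hjA1 : 1 ≤ A.count j := Multiset.one_le_count_iff_mem.mpr hjA
      obtain ⟨E, hE, hjE, hsE, hEA⟩ := hGF A hA (by
        rw [Multiset.le_iff_count]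
        intro l
        have := hlA l
        grind) hAF
      have h1 := count_shiftMul hij (Multiset.count_eq_zero_of_notMem hjE) hsE i
      rw [hEA, if_pos rfl] at h1
      omega
    · -- The shift of `A` is the shift of a moved set, which is `A` by injectivity.
      have hjA0 : A.count j = 0 := Multiset.count_eq_zero_of_notMem hjA
      have hcA := count_shiftMul hij hjA0 hsA
      obtain ⟨E, hE, hjE, hsE, hEA⟩ := hGF (shiftMul i s j A) (shiftMul_isKMultisetOf hj hA) (by
        rw [Multiset.le_iff_count]
        intro l
        rw [hcA]
        have := hlA l
        grind) (hno _ (by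
        rw [hcA, if_pos rfl]
        omega))
      have hjE0 : E.count j = 0 := Multiset.count_eq_zero_of_notMem hjE
      have hcE := count_shiftMul hij hjE0 hsE
      have hEq : E = A := by
        ext l
        have h1 := hcA l
        have h2 := hcA j
        rw [← hEA, hcE] at h1 h2
        grind
      exact hEq ▸ hE
end
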